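/- arXiv:1407.0103 — 6 statements merged into one kernel-verified Lean document; each statement's English description precedes it below -/
import Mathlib

section
/- Let 𝒫 ∈ ℝ^{n×n} be an idempotent matrix (𝒫𝒫 = 𝒫) with 𝒫 ≠ 0 and 𝒫 ≠ I. Then the spectral norms of 𝒫 and of its complementary projection coincide: ‖𝒫‖₂ = ‖I − 𝒫‖₂. -/
/-!
Let `T` be a nonzero idempotent and split `x = u + w` with `u = T x`, `w = x - T x`. When `u` and
`w` are both nonzero, exchange their lengths: `y = (‖w‖ / ‖u‖) u + (‖u‖ / ‖w‖) w` satisfies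
`‖y‖ = ‖x‖`, because the cross term `2 ⟪u, w⟫` is unchanged, while `T y = (‖w‖ / ‖u‖) u` has norm
`‖w‖`. Hence `‖x - T x‖ = ‖T y‖ ≤ ‖T‖ ‖x‖`, so `‖1 - T‖ ≤ ‖T‖`
(`norm_one_sub_le_of_idempotent`). If `u = 0`, the same bound is `1 ≤ ‖T‖`, which is where `T ≠ 0`
enters. Applying this to `1 - T` as well gives equality.
-/

open Matrix

/-- A selection matrix: columns are distinct standard basis vectors of ℝⁿ. -/
def IsSelectionMatrix {n m : ℕ} (P : Matrix (Fin n) (Fin m) ℝ) : Prop :=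
  ∃ ℘ : Fin m → Fin n, Function.Injective ℘ ∧ ∀ i j, P i j = if i = ℘ j then 1 else 0

/-- Spectral (ℓ²-operator) norm of a real matrix. -/
noncomputable def specNorm {a b : ℕ} (M : Matrix (Fin a) (Fin b) ℝ) : ℝ :=
  ‖LinearMap.toContinuousLinearMap (Matrix.toEuclideanLin M)‖

/-- Euclidean norm of a vector in ℝⁿ. -/
noncomputable def eunorm {n : ℕ} (v : Fin n → ℝ) : ℝ := Real.sqrt (∑ i, v i ^ 2)
lemma one_le_norm_of_idempotent {E : Type*} [NormedAddCommGroup E] [NormedSpace ℝ E]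
    (T : E →L[ℝ] E) (hT : T * T = T) (h0 : T ≠ 0) : 1 ≤ ‖T‖ := by
  have hpos : 0 < ‖T‖ := norm_pos_iff.mpr h0
  have h : ‖T‖ ≤ ‖T‖ * ‖T‖ := by
    simpa only [hT] using norm_mul_le T T
  nlinarith

lemma norm_one_sub_le_of_idempotent {E : Type*} [NormedAddCommGroup E] [InnerProductSpace ℝ E]
    (T : E →L[ℝ] E) (hT : T * T = T) (h0 : T ≠ 0) : ‖1 - T‖ ≤ ‖T‖ := by
  refine ContinuousLinearMap.opNorm_le_bound _ (norm_nonneg _) fun x => ?_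
  have hTT : T (T x) = T x := congrArg (fun S : E →L[ℝ] E => S x) hT
  obtain ⟨u, hu⟩ : ∃ u, u = T x := ⟨_, rfl⟩
  obtain ⟨w, hw⟩ : ∃ w, w = x - T x := ⟨_, rfl⟩
  have hTu : T u = u := by rw [hu, hTT]
  have hTw : T w = 0 := by rw [hw, map_sub, hTT, sub_self]
  have hx : x = u + w := by rw [hu, hw]; abel
  change ‖x - T x‖ ≤ _
  rw [← hw]
  by_cases hu0 : u = 0
  · rw [hx, hu0, zero_add]
    exact le_mul_of_one_le_left (norm_nonneg _) (one_le_norm_of_idempotent T hT h0)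
  by_cases hw0 : w = 0
  · rw [hw0, norm_zero]
    positivity
  have hun : ‖u‖ ≠ 0 := norm_ne_zero_iff.mpr hu0
  have hwn : ‖w‖ ≠ 0 := norm_ne_zero_iff.mpr hw0
  have hy : ‖(‖w‖ / ‖u‖) • u + (‖u‖ / ‖w‖) • w‖ = ‖x‖ := by
    rw [← sq_eq_sq₀ (norm_nonneg _) (norm_nonneg _), hx, norm_add_sq_real, norm_add_sq_real,
      real_inner_smul_left, real_inner_smul_right, norm_smul, norm_smul, norm_div, norm_div,
      norm_norm, norm_norm]
    field_simp
    ring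
  have hTy : ‖T ((‖w‖ / ‖u‖) • u + (‖u‖ / ‖w‖) • w)‖ = ‖w‖ := by
    rw [map_add, map_smul, map_smul, hTu, hTw, smul_zero, add_zero, norm_smul, norm_div,
      norm_norm, norm_norm, div_mul_cancel₀ _ hun]
  rw [← hTy, ← hy]
  exact T.le_opNorm _

/-- A nontrivial idempotent matrix and its complementary projection have the same
spectral norm. -/
theorem idempotent_norm_eq_complement {n : ℕ} (Pr : Matrix (Fin n) (Fin n) ℝ)
    (hidem : Pr * Pr = Pr) (h0 : Pr ≠ 0) (h1 : Pr ≠ 1) :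
    specNorm Pr = specNorm (1 - Pr) := by
  have hspec : ∀ M : Matrix (Fin n) (Fin n) ℝ,
      specNorm M = ‖Matrix.toEuclideanCLM (n := Fin n) (𝕜 := ℝ) M‖ := fun _ => rfl
  rw [hspec, hspec, map_sub, map_one]
  set T := Matrix.toEuclideanCLM (n := Fin n) (𝕜 := ℝ) Pr with hTdef
  have hT : T * T = T := by rw [hTdef, ← map_mul, hidem]
  have hT0 : T ≠ 0 := (EmbeddingLike.map_ne_zero_iff).mpr h0
  have hT1 : 1 - T ≠ 0 := by
    rw [sub_ne_zero]
    exact fun h => h1 ((EmbeddingLike.map_eq_one_iff).mp h.symm)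
  refine le_antisymm ?_ (norm_one_sub_le_of_idempotent T hT hT0)
  have h := norm_one_sub_le_of_idempotent (1 - T) (IsIdempotentElem.one_sub hT) hT1
  rwa [sub_sub_cancel] at h
end

section
/- Let 1 ≤ m < n, let P ∈ ℝ^{n×m} be a selection matrix, and let Ψ ∈ ℝ^{n×m} have orthonormal columns (ΨᵀΨ = Iₘ) with PᵀΨ invertible. Then for every f ∈ ℝⁿ, the DEIM error satisfies ‖f − Ψ(PᵀΨ)⁻¹Pᵀf‖₂² ≤ ‖(PᵀΨ)⁻¹‖₂² · ‖f − ΨΨᵀf‖₂², where ΨΨᵀf is the orthogonal projection of f onto the column space of Ψ. -/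
/-!
Write `A = PᵀΨ`, `s = ‖A⁻¹‖₂`, `r = f - ΨΨᵀf` and `c = A⁻¹Pᵀr`. The DEIM operator fixes the range
of `Ψ`, so the DEIM error is `r - Ψc`, and since `Ψᵀr = 0` its squared norm is `‖r‖² + ‖c‖²`.
It remains to show `‖c‖² ≤ (s² - 1)‖r‖²`.

For any `x ∈ ℝᵐ` the vector `w = P A⁻ᵀ x` satisfies `Ψᵀw = x` and `‖w‖ = ‖A⁻ᵀx‖ ≤ s‖x‖`, hence
`‖w - Ψx‖² = ‖w‖² - ‖x‖² ≤ (s² - 1)‖x‖²` (`lift_sub_sq_le`). With a nonzero `x` (here `m ≥ 1` is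
needed) this gives `s ≥ 1`. With `x = c` one has `‖c‖² = r · w = r · (w - Ψc)`, because
`r ⟂ range Ψ`, and Cauchy–Schwarz yields `‖c‖⁴ ≤ ‖r‖² (s² - 1)‖c‖²`. This is the argument
that a nontrivial oblique projector and its complement have the same norm.
-/

open Matrix

lemma eunorm_sq {n : ℕ} (v : Fin n → ℝ) : eunorm v ^ 2 = v ⬝ᵥ v := by
  rw [eunorm, Real.sq_sqrt (Finset.sum_nonneg fun i _ => sq_nonneg _)]
  simp [dotProduct, sq]

lemma eunorm_eq_norm {n : ℕ} (v : Fin n → ℝ) : eunorm v = ‖WithLp.toLp 2 v‖ := by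
  simp [eunorm, EuclideanSpace.norm_eq]

section
open scoped Matrix.Norms.L2Operator

lemma specNorm_eq_norm {a b : ℕ} (M : Matrix (Fin a) (Fin b) ℝ) : specNorm M = ‖M‖ := by
  rw [specNorm, Matrix.l2_opNorm_def]
  rfl

lemma specNorm_transpose {a b : ℕ} (M : Matrix (Fin a) (Fin b) ℝ) :
    specNorm Mᵀ = specNorm M := by
  rw [specNorm_eq_norm, specNorm_eq_norm, ← Matrix.l2_opNorm_conjTranspose M,
    Matrix.conjTranspose_eq_transpose_of_trivial]

end

lemma mulVec_sq_le {a b : ℕ} (M : Matrix (Fin a) (Fin b) ℝ) (v : Fin b → ℝ) :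
    (M *ᵥ v) ⬝ᵥ (M *ᵥ v) ≤ specNorm M ^ 2 * (v ⬝ᵥ v) := by
  rw [← eunorm_sq, ← eunorm_sq, ← mul_pow]
  have h := (LinearMap.toContinuousLinearMap (Matrix.toEuclideanLin M)).le_opNorm (WithLp.toLp 2 v)
  have h' : eunorm (M *ᵥ v) ≤ specNorm M * eunorm v := by
    rw [eunorm_eq_norm, eunorm_eq_norm]
    exact h
  exact pow_le_pow_left₀ (Real.sqrt_nonneg _) h' 2

lemma dotProduct_sq_le {n : ℕ} (u v : Fin n → ℝ) :
    (u ⬝ᵥ v) ^ 2 ≤ (u ⬝ᵥ u) * (v ⬝ᵥ v) := by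
  simpa [dotProduct, sq] using Finset.sum_mul_sq_le_sq_mul_sq Finset.univ u v

lemma IsSelectionMatrix.transpose_mul_self {n m : ℕ} {P : Matrix (Fin n) (Fin m) ℝ}
    (hP : IsSelectionMatrix P) : Pᵀ * P = 1 := by
  obtain ⟨p, hp, h⟩ := hP
  ext i j
  simp [Matrix.mul_apply, h, Matrix.one_apply, hp.eq_iff, eq_comm]

/-- The adjoint of `M` with respect to the dot product is `Mᵀ`. -/
lemma mulVec_dotProduct_eq {a b : ℕ} (M : Matrix (Fin a) (Fin b) ℝ) (x : Fin b → ℝ)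
    (y : Fin a → ℝ) : (M *ᵥ x) ⬝ᵥ y = x ⬝ᵥ (Mᵀ *ᵥ y) := by
  rw [Matrix.mulVec_transpose, dotProduct_comm, Matrix.dotProduct_mulVec, dotProduct_comm]

lemma isometry_dotProduct {a b : ℕ} {M : Matrix (Fin a) (Fin b) ℝ} (hM : Mᵀ * M = 1)
    (x y : Fin b → ℝ) : (M *ᵥ x) ⬝ᵥ (M *ᵥ y) = x ⬝ᵥ y := by
  rw [mulVec_dotProduct_eq, Matrix.mulVec_mulVec, hM, Matrix.one_mulVec]

/-- The vector `w = P (PᵀΨ)⁻ᵀ x` is a lift of `x` along `Ψᵀ`. -/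
lemma transpose_mulVec_lift {n m : ℕ} {P Ψ : Matrix (Fin n) (Fin m) ℝ}
    (hinv : IsUnit (Pᵀ * Ψ)) (x : Fin m → ℝ) :
    Ψᵀ *ᵥ (P *ᵥ (((Pᵀ * Ψ)⁻¹)ᵀ *ᵥ x)) = x := by
  have h : Ψᵀ * (P * ((Pᵀ * Ψ)⁻¹)ᵀ) = 1 := by
    rw [← Matrix.mul_assoc, ← Matrix.transpose_transpose (Ψᵀ * P), ← Matrix.transpose_mul,
      Matrix.transpose_mul Ψᵀ, Matrix.transpose_transpose,
      Matrix.nonsing_inv_mul _ ((Matrix.isUnit_iff_isUnit_det _).1 hinv), Matrix.transpose_one]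
  rw [Matrix.mulVec_mulVec, Matrix.mulVec_mulVec, Matrix.mul_assoc, h, Matrix.one_mulVec]

/-- The component of the lift `w = P (PᵀΨ)⁻ᵀ x` orthogonal to the range of `Ψ` has squared norm
`‖w‖² - ‖x‖²`, which is controlled by the spectral norm of `(PᵀΨ)⁻¹`. -/
lemma lift_sub_sq_le {n m : ℕ} {P Ψ : Matrix (Fin n) (Fin m) ℝ}
    (hP : IsSelectionMatrix P) (hΨ : Ψᵀ * Ψ = 1) (hinv : IsUnit (Pᵀ * Ψ)) (x : Fin m → ℝ) :
    (P *ᵥ (((Pᵀ * Ψ)⁻¹)ᵀ *ᵥ x) - Ψ *ᵥ x) ⬝ᵥ (P *ᵥ (((Pᵀ * Ψ)⁻¹)ᵀ *ᵥ x) - Ψ *ᵥ x) ≤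
      (specNorm ((Pᵀ * Ψ)⁻¹) ^ 2 - 1) * (x ⬝ᵥ x) := by
  have h1 := mulVec_sq_le ((Pᵀ * Ψ)⁻¹)ᵀ x
  rw [specNorm_transpose, ← isometry_dotProduct hP.transpose_mul_self] at h1
  have h2 := mulVec_dotProduct_eq Ψ x (P *ᵥ (((Pᵀ * Ψ)⁻¹)ᵀ *ᵥ x))
  rw [transpose_mulVec_lift hinv] at h2
  have h3 := isometry_dotProduct hΨ x x
  rw [sub_dotProduct, dotProduct_sub, dotProduct_sub,
    dotProduct_comm _ (Ψ *ᵥ x), h2, h3]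
  linarith

lemma one_le_specNorm_sq {n m : ℕ} (hm : 1 ≤ m) {P Ψ : Matrix (Fin n) (Fin m) ℝ}
    (hP : IsSelectionMatrix P) (hΨ : Ψᵀ * Ψ = 1) (hinv : IsUnit (Pᵀ * Ψ)) :
    1 ≤ specNorm ((Pᵀ * Ψ)⁻¹) ^ 2 := by
  have h := lift_sub_sq_le hP hΨ hinv (Pi.single (⟨0, hm⟩ : Fin m) 1)
  rw [← eunorm_sq] at h
  simp only [single_dotProduct, Pi.single_eq_same, mul_one] at h
  linarith [h.trans' (sq_nonneg _)]

/-- The key estimate: if `r` is orthogonal to the range of `Ψ`, its DEIM coefficient vector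
`c = (PᵀΨ)⁻¹Pᵀr` satisfies `‖c‖² ≤ (s² - 1)‖r‖²`. The bound `s ≥ 1` is used when `c = 0`. -/
lemma coeff_sq_le {n m : ℕ} (hm : 1 ≤ m) {P Ψ : Matrix (Fin n) (Fin m) ℝ}
    (hP : IsSelectionMatrix P) (hΨ : Ψᵀ * Ψ = 1) (hinv : IsUnit (Pᵀ * Ψ))
    {r : Fin n → ℝ} (hr : Ψᵀ *ᵥ r = 0) {c : Fin m → ℝ} (hc : c = (Pᵀ * Ψ)⁻¹ *ᵥ (Pᵀ *ᵥ r)) :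
    c ⬝ᵥ c ≤ (specNorm ((Pᵀ * Ψ)⁻¹) ^ 2 - 1) * (r ⬝ᵥ r) := by
  have hs := one_le_specNorm_sq hm hP hΨ hinv
  have hw := lift_sub_sq_le hP hΨ hinv c
  set w := P *ᵥ (((Pᵀ * Ψ)⁻¹)ᵀ *ᵥ c) with hw_def
  have h1 : c ⬝ᵥ c = r ⬝ᵥ (w - Ψ *ᵥ c) := by
    have e1 : r ⬝ᵥ (Ψ *ᵥ c) = 0 := by
      rw [dotProduct_comm, mulVec_dotProduct_eq, hr, dotProduct_zero]
    have e2 : r ⬝ᵥ w = c ⬝ᵥ c := by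
      rw [dotProduct_comm, hw_def, mulVec_dotProduct_eq, mulVec_dotProduct_eq,
        Matrix.transpose_transpose, ← hc]
    rw [dotProduct_sub, e1, e2, sub_zero]
  have h2 := dotProduct_sq_le r (w - Ψ *ᵥ c)
  rw [← h1] at h2
  have hr0 : 0 ≤ r ⬝ᵥ r := eunorm_sq r ▸ sq_nonneg _
  have hc0 : 0 ≤ c ⬝ᵥ c := eunorm_sq c ▸ sq_nonneg _
  have h3 := mul_le_mul_of_nonneg_left hw hr0
  rcases hc0.eq_or_lt with h0 | h0
  · rw [← h0]
    exact mul_nonneg (by linarith) hr0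
  · refine le_of_mul_le_mul_right ?_ h0
    linarith

/-- DEIM error bound: the squared DEIM error is controlled by the squared best
approximation error times ‖(PᵀΨ)⁻¹‖₂². -/
theorem deim_error_bound {n m : ℕ} (hm : 1 ≤ m) (hmn : m < n)
    (P Ψ : Matrix (Fin n) (Fin m) ℝ)
    (hP : IsSelectionMatrix P) (hΨ : Ψᵀ * Ψ = 1) (hinv : IsUnit (Pᵀ * Ψ))
    (f : Fin n → ℝ) :
    eunorm (f - (Ψ * (Pᵀ * Ψ)⁻¹ * Pᵀ).mulVec f) ^ 2 ≤
      specNorm ((Pᵀ * Ψ)⁻¹) ^ 2 * eunorm (f - (Ψ * Ψᵀ).mulVec f) ^ 2 := by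
  set r := f - (Ψ * Ψᵀ).mulVec f with hr_def
  set c := (Pᵀ * Ψ)⁻¹ *ᵥ (Pᵀ *ᵥ r) with hc
  have hr : Ψᵀ *ᵥ r = 0 := by
    rw [hr_def, Matrix.mulVec_sub, Matrix.mulVec_mulVec, ← Matrix.mul_assoc, hΨ, Matrix.one_mul,
      sub_self]
  -- The DEIM operator fixes `ΨΨᵀf`, so it may be applied to the residual `r` instead of `f`.
  have herr : f - (Ψ * (Pᵀ * Ψ)⁻¹ * Pᵀ).mulVec f = r - Ψ *ᵥ c := by
    have hfix : Ψ * (Pᵀ * Ψ)⁻¹ * Pᵀ * (Ψ * Ψᵀ) = Ψ * Ψᵀ := by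
      rw [← Matrix.mul_assoc, Matrix.mul_assoc _ Pᵀ Ψ, Matrix.mul_assoc Ψ,
        Matrix.nonsing_inv_mul _ ((Matrix.isUnit_iff_isUnit_det _).1 hinv), Matrix.mul_one]
    rw [hc, Matrix.mulVec_mulVec, Matrix.mulVec_mulVec, hr_def,
      Matrix.mulVec_sub, Matrix.mulVec_mulVec, hfix]
    abel
  clear_value r
  have hpyth : (r - Ψ *ᵥ c) ⬝ᵥ (r - Ψ *ᵥ c) = r ⬝ᵥ r + c ⬝ᵥ c := by
    have e : (Ψ *ᵥ c) ⬝ᵥ r = 0 := by rw [mulVec_dotProduct_eq, hr, dotProduct_zero]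
    rw [sub_dotProduct, dotProduct_sub, dotProduct_sub, dotProduct_comm r (Ψ *ᵥ c), e,
      isometry_dotProduct hΨ]
    ring
  rw [herr, eunorm_sq, eunorm_sq, hpyth]
  linarith [coeff_sq_le hm hP hΨ hinv hr hc]
end

section
/- Let n ≥ m ≥ 1, let P ∈ ℝ^{n×m} be a selection matrix, let Ψ ∈ ℝ^{n×m} be such that PᵀΨ is invertible, and let ψ ∈ ℝⁿ be a vector not in the column space of Ψ. Then the greedy DEIM residual r := ψ − Ψ(PᵀΨ)⁻¹Pᵀψ is nonzero, and for any index p ∈ {1,…,n} with r_p ≠ 0, the (m+1)×(m+1) matrix [P, e_p]ᵀ[Ψ, ψ] obtained by appending the standard basis vector e_p to P and the column ψ to Ψ is invertible. (Hence each step of the greedy DEIM index-selection algorithm is well defined when the input basis vectors are linearly independent.) -/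
open Matrix

/-!
Put `A := PᵀΨ` and `r := ψ - Ψ A⁻¹ Pᵀ ψ`. The vector `Ψ A⁻¹ Pᵀ ψ` lies in the column space of `Ψ`,
so `r = 0` would put `ψ` there as well.

For invertibility of the enlarged matrix it suffices that its kernel is trivial. If `(w, c)` is in
the kernel, then `u := Ψ w + c ψ` satisfies `Pᵀ u = 0` and `u_p = 0`. The first relation says
`w = -c A⁻¹ Pᵀ ψ`, whence `u = c r`; the second then reads `c r_p = 0`, so `c = 0` and `w = 0`.
-/

/-- Each greedy DEIM step is well defined: the residual is nonzero, and appending an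
index where the residual does not vanish keeps the interpolation matrix invertible. -/
theorem deim_greedy_step_well_defined {n m : ℕ} (hm : 1 ≤ m) (hmn : m ≤ n)
    (P Ψ : Matrix (Fin n) (Fin m) ℝ)
    (hP : IsSelectionMatrix P) (hinv : IsUnit (Pᵀ * Ψ))
    (ψ : Fin n → ℝ) (hψ : ψ ∉ Set.range Ψ.mulVec) :
    ψ - (Ψ * (Pᵀ * Ψ)⁻¹ * Pᵀ).mulVec ψ ≠ 0 ∧
    ∀ p : Fin n, (ψ - (Ψ * (Pᵀ * Ψ)⁻¹ * Pᵀ).mulVec ψ) p ≠ 0 →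
      IsUnit
        (((Matrix.of fun i (j : Fin (m + 1)) =>
            Fin.snoc (fun j' => P i j') (if i = p then (1 : ℝ) else 0) j)ᵀ) *
          (Matrix.of fun i (j : Fin (m + 1)) =>
            Fin.snoc (fun j' => Ψ i j') (ψ i) j)) := by
  refine ⟨fun h => hψ ⟨((Pᵀ * Ψ)⁻¹ * Pᵀ) *ᵥ ψ, ?_⟩, fun p hp => ?_⟩
  · rw [mulVec_mulVec, ← Matrix.mul_assoc]
    exact (sub_eq_zero.mp h).symm
  have hdet : IsUnit (Pᵀ * Ψ).det := (Matrix.isUnit_iff_isUnit_det _).mp hinv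
  rw [← Matrix.mulVec_injective_iff_isUnit, ← Matrix.coe_mulVecLin, injective_iff_map_eq_zero]
  intro v hv
  rw [Matrix.mulVecLin_apply, ← mulVec_mulVec] at hv
  set w : Fin m → ℝ := fun j => v j.castSucc with hw
  set c : ℝ := v (Fin.last m) with hc
  have hu : (Matrix.of fun i (j : Fin (m + 1)) =>
      Fin.snoc (α := fun _ => ℝ) (fun j' => Ψ i j') (ψ i) j) *ᵥ v = Ψ *ᵥ w + c • ψ := by
    ext i
    simp [mulVec, dotProduct, Fin.sum_univ_castSucc, hw, hc, mul_comm]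
  rw [hu] at hv
  have hPu : Pᵀ *ᵥ (Ψ *ᵥ w + c • ψ) = 0 := by
    ext j
    have := congrFun hv j.castSucc
    simpa [mulVec, dotProduct] using this
  have hup : (Ψ *ᵥ w + c • ψ) p = 0 := by
    have := congrFun hv (Fin.last m)
    simpa [mulVec, dotProduct] using this
  have hwc : w = -(c • ((Pᵀ * Ψ)⁻¹ *ᵥ (Pᵀ *ᵥ ψ))) := by
    have h := congrArg ((Pᵀ * Ψ)⁻¹ *ᵥ ·) hPu
    simp only [mulVec_add, mulVec_smul, mulVec_zero] at h
    rw [mulVec_mulVec w Pᵀ Ψ, mulVec_mulVec w, nonsing_inv_mul _ hdet, one_mulVec] at h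
    exact eq_neg_of_add_eq_zero_left h
  have hur : Ψ *ᵥ w + c • ψ = c • (ψ - (Ψ * (Pᵀ * Ψ)⁻¹ * Pᵀ) *ᵥ ψ) := by
    rw [hwc, mulVec_neg, mulVec_smul, ← mulVec_mulVec, ← mulVec_mulVec, smul_sub]
    abel
  have hc0 : c = 0 := by
    rw [hur, Pi.smul_apply, smul_eq_mul] at hup
    exact (mul_eq_zero.mp hup).resolve_right hp
  have hw0 : w = 0 := by rw [hwc, hc0, zero_smul, neg_zero]
  ext j
  refine Fin.lastCases hc0 (fun j' => congrFun hw0 j') j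
end

section
/- Let f : ℝ → ℝ with componentwise application F : ℝⁿ → ℝⁿ, let ω₁, …, ω_N ⊆ {1,…,n} with diagonal partition-of-unity matrices D₁, …, D_N (diagonal entries in [0,1], (D_i)_{kk} = 0 for k ∉ ω_i, ∑_i D_i = Iₙ), let φ₁, …, φ_{n_c} ∈ ℝⁿ, and let I^{ω_i} = { j : φ_j has a nonzero component at some index in ω_i }. Then for every z ∈ ℝ^{n_c}, F(∑_{j=1}^{n_c} z_j φ_j) = ∑_{i=1}^N D_i F(∑_{j ∈ I^{ω_i}} z_j φ_j); that is, the global nonlinear evaluation decomposes exactly into partition-of-unity-weighted local evaluations involving only locally supported basis vectors. -/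
/-! Fix a component `k`. The weights `d i k` sum to one, so the global value
`f ((∑ j, z j • φ j) k)` is the sum over `i` of its multiples by `d i k`. If `k ∉ ω i` the weight
vanishes; if `k ∈ ω i`, every `φ j` omitted from the local sum vanishes at `k`, so the local and
global arguments of `f` coincide. -/

open Matrix

/-- The global componentwise nonlinear evaluation decomposes exactly into
partition-of-unity-weighted local evaluations using only locally supported bases. -/
theorem componentwise_partition_of_unity_decomposition {n N nc : ℕ} (f : ℝ → ℝ)
    (ω : Fin N → Finset (Fin n)) (d : Fin N → Fin n → ℝ)
    (hd0 : ∀ i k, 0 ≤ d i k) (hd1 : ∀ i k, d i k ≤ 1)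
    (hsupp : ∀ i k, k ∉ ω i → d i k = 0)
    (hpu : ∑ i, Matrix.diagonal (d i) = 1)
    (φ : Fin nc → Fin n → ℝ) (z : Fin nc → ℝ) :
    (fun k => f ((∑ j, z j • φ j) k)) =
      ∑ i, (Matrix.diagonal (d i)).mulVec
        (fun k => f ((∑ j ∈ Finset.univ.filter fun j => ∃ l ∈ ω i, φ j l ≠ 0,
          z j • φ j) k)) := by
  -- the `(k, k)` entry of the partition of unity
  have hk : ∀ k, ∑ i, d i k = 1 := fun k => by
    simpa [Matrix.sum_apply] using congrFun (congrFun hpu k) k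
  funext k
  simp only [Finset.sum_apply, Matrix.mulVec_diagonal]
  rw [← one_mul (f _), ← hk k, Finset.sum_mul]
  refine Finset.sum_congr rfl fun i _ => ?_
  by_cases h : k ∈ ω i
  -- an omitted `φ j` vanishes on all of `ω i`, in particular at `k`
  · congr 2
    symm
    refine Finset.sum_subset (Finset.filter_subset _ _) fun j _ hj => ?_
    have h0 : φ j k = 0 := by
      by_contra hne
      exact hj (Finset.mem_filter.2 ⟨Finset.mem_univ j, k, h, hne⟩)
    simp [h0]
  · simp [hsupp i k h]
end

section
/- Let f₁, …, f_s ∈ ℝⁿ be snapshot vectors, F ∈ ℝ^{n×s} the matrix with columns f_j, and λ₁ ≥ … ≥ λₙ ≥ 0 the eigenvalues of FFᵀ. Then for every linear subspace V ⊆ ℝⁿ with dim V ≤ L, ∑_{j=1}^{s} dist(f_j, V)² ≥ ∑_{k=L+1}^{n} λ_k, where dist(f, V) is the Euclidean distance from f to V. In particular, the span of the top L eigenvectors of FFᵀ minimizes the total squared snapshot approximation error among all subspaces of dimension at most L. -/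
/-!
The squared distance of `x` to `V` is the squared norm of the component of `x` in `W = Vᗮ`, that is
`∑ i, ⟪w i, x⟫²` for any orthonormal basis `w` of `W` (`infDist_sq_eq_sum_inner_sq`).
Since `∑ j, ⟪f j, x⟫² = ⟪F Fᵀ x, x⟫ = ∑ k, λ k ⟪u k, x⟫²` (`sum_inner_sq_eq_sum_eig`), exchanging
sums shows that the total snapshot error equals `∑ k, λ k * c k` with `c k = ∑ i, ⟪w i, u k⟫²`.
The weights satisfy `0 ≤ c k ≤ 1` and `∑ k, c k = dim W ≥ n - L`, and for nonincreasing nonnegative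
`λ` such a weighted sum is smallest when all weight sits on the last `n - L` indices
(`sum_tail_le_sum_mul`).
-/

open Matrix

open scoped RealInnerProductSpace

theorem infDist_sq_eq_sum_inner_sq {E ι : Type*} [NormedAddCommGroup E] [InnerProductSpace ℝ E]
    [FiniteDimensional ℝ E] [Fintype ι] (V : Submodule ℝ E) (w : OrthonormalBasis ι ℝ Vᗮ) (x : E) :
    Metric.infDist x (V : Set E) ^ 2 = ∑ i, ⟪(w i : E), x⟫ ^ 2 := by
  have h1 : Metric.infDist x (V : Set E) = ‖Vᗮ.orthogonalProjectionOnto x‖ := by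
    rw [Metric.infDist_eq_iInf, Submodule.coe_norm, ← Submodule.starProjection_apply,
      Submodule.starProjection_orthogonal_val, Submodule.starProjection_minimal]
    simp only [dist_eq_norm]
    rfl
  rw [h1, ← w.sum_sq_inner_right]
  refine Finset.sum_congr rfl fun i _ => ?_
  rw [Submodule.inner_orthogonalProjectionOnto_eq_of_mem_left]

/-- The quadratic form of `F Fᵀ`, evaluated from the snapshots and from the spectral
decomposition. -/
theorem sum_inner_sq_eq_sum_eig {n s : ℕ}
    (f : Fin s → EuclideanSpace ℝ (Fin n))
    (F : Matrix (Fin n) (Fin s) ℝ) (hF : ∀ i j, F i j = f j i)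
    (lam : Fin n → ℝ) (b : OrthonormalBasis (Fin n) ℝ (EuclideanSpace ℝ (Fin n)))
    (heig : ∀ k, Matrix.toEuclideanLin (F * Fᵀ) (b k) = lam k • b k)
    (x : EuclideanSpace ℝ (Fin n)) :
    ∑ j, ⟪f j, x⟫ ^ 2 = ∑ k, lam k * ⟪b k, x⟫ ^ 2 := by
  have hT : ∀ y, Matrix.toEuclideanLin (F * Fᵀ) y = ∑ j, ⟪f j, y⟫ • f j := by
    intro y
    ext i
    simp only [Matrix.toLpLin_apply, ← Matrix.mulVec_mulVec, WithLp.ofLp_sum, WithLp.ofLp_smul,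
      Finset.sum_apply, Pi.smul_apply, smul_eq_mul, PiLp.inner_apply, RCLike.inner_apply,
      conj_trivial]
    simp only [Matrix.mulVec, dotProduct, Matrix.transpose_apply, hF]
    refine Finset.sum_congr rfl fun j _ => ?_
    rw [mul_comm]
    congr 1
    exact Finset.sum_congr rfl fun l _ => mul_comm _ _
  have hq : ∀ y z, ⟪Matrix.toEuclideanLin (F * Fᵀ) y, z⟫ = ∑ j, ⟪f j, y⟫ * ⟪f j, z⟫ := by
    intro y z
    rw [hT, sum_inner]
    simp only [real_inner_smul_left]
  calc ∑ j, ⟪f j, x⟫ ^ 2 = ⟪Matrix.toEuclideanLin (F * Fᵀ) x, x⟫ := by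
        rw [hq]; simp only [sq]
    _ = ∑ k, ⟪Matrix.toEuclideanLin (F * Fᵀ) x, b k⟫ * ⟪b k, x⟫ :=
        (b.sum_inner_mul_inner _ _).symm
    _ = ∑ k, lam k * ⟪b k, x⟫ ^ 2 := by
        refine Finset.sum_congr rfl fun k _ => ?_
        have : ⟪Matrix.toEuclideanLin (F * Fᵀ) x, b k⟫
            = ⟪Matrix.toEuclideanLin (F * Fᵀ) (b k), x⟫ := by
          rw [hq, hq]
          exact Finset.sum_congr rfl fun j _ => mul_comm _ _
        rw [this, heig, real_inner_smul_left]
        ring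

/-- Bathtub principle: a nonincreasing nonnegative sequence, summed with weights in `[0, 1]` of
total mass at least `n - L`, gives at least the sum of its last `n - L` terms. -/
theorem sum_tail_le_sum_mul {n : ℕ} (lam c : Fin n → ℝ)
    (hmono : ∀ k l : Fin n, k ≤ l → lam l ≤ lam k) (hnonneg : ∀ k, 0 ≤ lam k)
    (hc0 : ∀ k, 0 ≤ c k) (hc1 : ∀ k, c k ≤ 1) (L : ℕ) (hsum : (n : ℝ) - L ≤ ∑ k, c k) :
    ∑ k ∈ Finset.univ.filter fun k : Fin n => L ≤ (k : ℕ), lam k ≤ ∑ k, lam k * c k := by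
  rw [Finset.sum_filter]
  by_cases hL : L < n
  · -- The threshold value `lam L` separates the two index ranges.
    set m := lam ⟨L, hL⟩ with hm
    have hcard : ∑ k : Fin n, (if L ≤ (k : ℕ) then (1 : ℝ) else 0) = n - L := by
      rw [Fin.sum_univ_eq_sum_range (fun k => if L ≤ k then (1 : ℝ) else 0), ← Finset.sum_filter]
      have : (Finset.range n).filter (fun k => L ≤ k) = Finset.Ico L n := by
        ext k; simp [and_comm]
      rw [this]
      simp [Nat.cast_sub hL.le]
    have hpt : ∀ k : Fin n, m * (c k - if L ≤ (k : ℕ) then (1 : ℝ) else 0) ≤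
        lam k * c k - if L ≤ (k : ℕ) then lam k else 0 := by
      intro k
      split_ifs with h
      · have := hmono ⟨L, hL⟩ k h
        nlinarith [hc1 k]
      · have := hmono k ⟨L, hL⟩ (not_le.mp h).le
        nlinarith [hc0 k]
    have h := Finset.sum_le_sum fun k (_ : k ∈ Finset.univ) => hpt k
    rw [← Finset.mul_sum, Finset.sum_sub_distrib, Finset.sum_sub_distrib, hcard] at h
    have : 0 ≤ m * (∑ k, c k - (n - L)) :=
      mul_nonneg (hnonneg _) (by linarith)
    linarith
  · rw [Finset.sum_eq_zero fun k _ => if_neg (by omega)]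
    exact Finset.sum_nonneg fun k _ => mul_nonneg (hnonneg k) (hc0 k)

/-- POD optimality: every subspace of dimension at most L incurs a total squared
snapshot error at least the sum of the discarded eigenvalues of F Fᵀ. -/
theorem pod_optimality {n s : ℕ}
    (f : Fin s → EuclideanSpace ℝ (Fin n))
    (F : Matrix (Fin n) (Fin s) ℝ) (hF : ∀ i j, F i j = f j i)
    (lam : Fin n → ℝ) (u : Fin n → EuclideanSpace ℝ (Fin n))
    (hmono : ∀ k l : Fin n, k ≤ l → lam l ≤ lam k)
    (hnonneg : ∀ k, 0 ≤ lam k)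
    (hu : Orthonormal ℝ u)
    (heig : ∀ k, Matrix.toEuclideanLin (F * Fᵀ) (u k) = lam k • u k)
    (L : ℕ) (V : Submodule ℝ (EuclideanSpace ℝ (Fin n)))
    (hV : Module.finrank ℝ V ≤ L) :
    ∑ k ∈ Finset.univ.filter fun k : Fin n => L ≤ (k : ℕ), lam k ≤
      ∑ j, Metric.infDist (f j) (V : Set (EuclideanSpace ℝ (Fin n))) ^ 2 := by
  obtain ⟨b, rfl⟩ : ∃ b : OrthonormalBasis (Fin n) ℝ (EuclideanSpace ℝ (Fin n)), ⇑b = u :=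
    ⟨OrthonormalBasis.mk hu
      (hu.linearIndependent.span_eq_top_of_card_eq_finrank' (by simp)).ge, by simp⟩
  have w := stdOrthonormalBasis ℝ Vᗮ
  have hwnorm : ∀ i, ‖(w i : EuclideanSpace ℝ (Fin n))‖ = 1 := fun i => w.norm_eq_one i
  have herr : ∑ j, Metric.infDist (f j) (V : Set (EuclideanSpace ℝ (Fin n))) ^ 2 =
      ∑ k, lam k * ∑ i, ⟪(w i : EuclideanSpace ℝ (Fin n)), b k⟫ ^ 2 := by
    simp only [infDist_sq_eq_sum_inner_sq V w, Finset.mul_sum]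
    rw [Finset.sum_comm, Finset.sum_comm (s := Finset.univ (α := Fin n))]
    refine Finset.sum_congr rfl fun i _ => ?_
    simp only [fun x => real_inner_comm x (w i : EuclideanSpace ℝ (Fin n))]
    exact sum_inner_sq_eq_sum_eig f F hF lam b heig _
  rw [herr]
  refine sum_tail_le_sum_mul lam _ hmono hnonneg
    (fun k => Finset.sum_nonneg fun i _ => sq_nonneg _) (fun k => ?_) L ?_
  · -- The weight is the squared distance of a unit vector to `V`, which contains `0`.
    rw [← infDist_sq_eq_sum_inner_sq]
    have h : Metric.infDist (b k) (V : Set (EuclideanSpace ℝ (Fin n))) ≤ 1 := by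
      simpa using Metric.infDist_le_dist_of_mem (x := b k) V.zero_mem
    exact pow_le_one₀ Metric.infDist_nonneg h
  · rw [Finset.sum_comm]
    simp only [b.sum_sq_inner_left, hwnorm]
    have hd := V.finrank_add_finrank_orthogonal
    rw [finrank_euclideanSpace_fin] at hd
    have : (n : ℝ) ≤ L + Module.finrank ℝ Vᗮ := by
      exact_mod_cast (by omega : n ≤ L + Module.finrank ℝ Vᗮ)
    simp
    linarith
end

section
/- Let ω₁, …, ω_N ⊆ {1,…,n}, let D₁, …, D_N be diagonal n×n matrices with diagonal entries in [0,1], (D_i)_{kk} = 0 for k ∉ ω_i, and ∑_{i=1}^N D_i = Iₙ, and suppose every index belongs to at most C of the sets ω_i. Let g ∈ ℝⁿ, and suppose for each i a vector g̃_i ∈ ℝⁿ and a number ε_i ≥ 0 satisfy the local approximation bound ∑_{k ∈ ω_i} (g − g̃_i)_k² ≤ ε_i² · ∑_{k ∈ ω_i} g_k². Then the globally assembled approximation ∑_{i=1}^N D_i g̃_i satisfies ‖g − ∑_{i=1}^N D_i g̃_i‖₂² ≤ C² · (max_{1≤i≤N} ε_i²) · ‖g‖₂². -/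
/-!
Since the weights `d i k` sum to `1` over `i`, the error at index `k` is the convex combination
`∑ i, d i k * (g k - gt i k)` of the local errors. Cauchy-Schwarz (Jensen for the square) bounds its
square by `∑ i, d i k * (g k - gt i k) ^ 2`, and the weights are at most `1` and supported in `ω i`.
Summing over `k` leaves the sum of the local squared errors, to which the local bounds apply;
finally each index is counted at most `C` times in `∑ i, ∑ k ∈ ω i, g k ^ 2`.
-/

open Matrix

/-- Local relative approximation bounds assemble, via a partition of unity with finite
overlap, into a global relative approximation bound. -/
theorem local_to_global_approximation {n N : ℕ} (hN : 0 < N)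
    (ω : Fin N → Finset (Fin n)) (d : Fin N → Fin n → ℝ)
    (hd0 : ∀ i k, 0 ≤ d i k) (hd1 : ∀ i k, d i k ≤ 1)
    (hsupp : ∀ i k, k ∉ ω i → d i k = 0)
    (hpu : ∑ i, Matrix.diagonal (d i) = 1)
    (C : ℕ) (hC : ∀ k : Fin n, (Finset.univ.filter fun i => k ∈ ω i).card ≤ C)
    (g : Fin n → ℝ) (gt : Fin N → Fin n → ℝ) (ε : Fin N → ℝ)
    (hε : ∀ i, 0 ≤ ε i)
    (hloc : ∀ i, ∑ k ∈ ω i, (g k - gt i k) ^ 2 ≤ ε i ^ 2 * ∑ k ∈ ω i, g k ^ 2) :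
    eunorm (g - ∑ i, (Matrix.diagonal (d i)).mulVec (gt i)) ^ 2 ≤
      (C : ℝ) ^ 2 * (Finset.univ.sup' (Finset.univ_nonempty_iff.mpr ⟨⟨0, hN⟩⟩)
        fun i => ε i ^ 2) * eunorm g ^ 2 := by
  have hpuk : ∀ k, ∑ i, d i k = 1 := by
    intro k
    have h := congrFun (congrFun hpu k) k
    simpa [Matrix.sum_apply] using h
  set M := Finset.univ.sup' (Finset.univ_nonempty_iff.mpr ⟨⟨0, hN⟩⟩) fun i => ε i ^ 2 with hM
  have hMi : ∀ i, ε i ^ 2 ≤ M := fun i =>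
    Finset.le_sup' (fun i => ε i ^ 2) (Finset.mem_univ i)
  have hM0 : 0 ≤ M := (sq_nonneg _).trans (hMi ⟨0, hN⟩)
  have hG0 : 0 ≤ ∑ k, g k ^ 2 := Finset.sum_nonneg fun k _ => sq_nonneg _
  have herr : ∀ k, (g - ∑ i, (Matrix.diagonal (d i)).mulVec (gt i)) k
      = ∑ i, d i k * (g k - gt i k) := by
    intro k
    simp only [Pi.sub_apply, Finset.sum_apply, Matrix.mulVec_diagonal, mul_sub,
      Finset.sum_sub_distrib, ← Finset.sum_mul, hpuk, one_mul]
  have hpoint : ∀ k, (∑ i, d i k * (g k - gt i k)) ^ 2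
      ≤ ∑ i, if k ∈ ω i then (g k - gt i k) ^ 2 else 0 := by
    intro k
    calc (∑ i, d i k * (g k - gt i k)) ^ 2
        ≤ (∑ i, d i k) * ∑ i, d i k * (g k - gt i k) ^ 2 :=
          Finset.sum_sq_le_sum_mul_sum_of_sq_le_mul _ (fun i _ => hd0 i k)
            (fun i _ => mul_nonneg (hd0 i k) (sq_nonneg _)) (fun i _ => le_of_eq (by ring))
      _ = ∑ i, d i k * (g k - gt i k) ^ 2 := by rw [hpuk, one_mul]
      _ ≤ _ := by
          refine Finset.sum_le_sum fun i _ => ?_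
          split_ifs with h
          · exact mul_le_of_le_one_left (sq_nonneg _) (hd1 i k)
          · rw [hsupp i k h, zero_mul]
  have hoverlap : ∑ i, ∑ k ∈ ω i, g k ^ 2 ≤ C * ∑ k, g k ^ 2 := by
    calc ∑ i, ∑ k ∈ ω i, g k ^ 2
        = ∑ k, ∑ i, if k ∈ ω i then g k ^ 2 else 0 := by
          rw [Finset.sum_comm]
          simp
      _ = ∑ k, ((Finset.univ.filter fun i => k ∈ ω i).card : ℝ) * g k ^ 2 := by
          simp [← Finset.sum_filter]
      _ ≤ ∑ k, (C : ℝ) * g k ^ 2 :=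
          Finset.sum_le_sum fun k _ =>
            mul_le_mul_of_nonneg_right (by exact_mod_cast hC k) (sq_nonneg _)
      _ = C * ∑ k, g k ^ 2 := by rw [Finset.mul_sum]
  -- The argument gives the sharper factor `C`; it is at most `C ^ 2` since `C` is a natural number.
  have hCC : (C : ℝ) ≤ (C : ℝ) ^ 2 := by exact_mod_cast Nat.le_self_pow two_ne_zero C
  unfold eunorm
  rw [Real.sq_sqrt (Finset.sum_nonneg fun k _ => sq_nonneg _), Real.sq_sqrt hG0]
  calc ∑ k, (g - ∑ i, (Matrix.diagonal (d i)).mulVec (gt i)) k ^ 2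
      = ∑ k, (∑ i, d i k * (g k - gt i k)) ^ 2 := by simp only [herr]
    _ ≤ ∑ k, ∑ i, if k ∈ ω i then (g k - gt i k) ^ 2 else 0 :=
        Finset.sum_le_sum fun k _ => hpoint k
    _ = ∑ i, ∑ k ∈ ω i, (g k - gt i k) ^ 2 := by
        rw [Finset.sum_comm]
        simp
    _ ≤ ∑ i, M * ∑ k ∈ ω i, g k ^ 2 :=
        Finset.sum_le_sum fun i _ => (hloc i).trans
          (mul_le_mul_of_nonneg_right (hMi i) (Finset.sum_nonneg fun k _ => sq_nonneg _))
    _ = M * ∑ i, ∑ k ∈ ω i, g k ^ 2 := by rw [Finset.mul_sum]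
    _ ≤ M * (C * ∑ k, g k ^ 2) := mul_le_mul_of_nonneg_left hoverlap hM0
    _ = C * M * ∑ k, g k ^ 2 := by ring
    _ ≤ (C : ℝ) ^ 2 * M * ∑ k, g k ^ 2 := by gcongr
end
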